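/- arXiv:1803.08640 — 2 statements merged into one kernel-verified Lean document; each statement's English description precedes it below -/
import Mathlib

section
/- Let ν_T, θ_T, ν_I, θ_I > 0 and β > 0. Let T and I be independent real random variables such that T is Gamma-distributed with shape ν_T and scale θ_T, and I is Gamma-distributed with shape ν_I and scale θ_I. Set q = β θ_I / θ_T. Then P(T < β I) = 1 − (q^{ν_T} Γ(ν_T + ν_I)) / (ν_I (q + 1)^{ν_T + ν_I} Γ(ν_T) Γ(ν_I)) · ₂F₁(1, ν_T + ν_I; ν_I + 1; 1/(q + 1)). -/
open MeasureTheory ProbabilityTheory Polynomial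

/-- The Gauss hypergeometric series `₂F₁(1, b; c; x) = ∑_k ((b)_k / (c)_k) x^k`,
where `(a)_k` is the ascending Pochhammer symbol. -/
noncomputable def hyp2F1One (b c x : ℝ) : ℝ :=
  ∑' k : ℕ, ((ascPochhammer ℝ k).eval b / (ascPochhammer ℝ k).eval c) * x ^ k

/-!
The densities of `Gamma(k + 1, r)`, `k ∈ ℕ`, sum to the constant `r` on the half-line (renewal
density of the Poisson process). Since the Gamma densities `f_a` of a common rate `r` form a
convolution semigroup, convolving this identity with `f_a` gives `r F_a(x) = ∑ₖ f_{a+k+1}(x)` for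
the distribution function `F_a`. For independent `X ∼ Gamma(a, r)` and `Y ∼ Gamma(b, s)`,
integrating the series for the distribution function of `Y` against the density of `X` turns
`P(Y ≤ X)` into a series of Gamma integrals, which is the hypergeometric one. The scale factor `β`
is absorbed into the rate of `I`.
-/

open Set Real
open scoped ENNReal Nat

lemma Gamma_add_natCast {z : ℝ} (hz : ∀ k : ℕ, z ≠ -k) (n : ℕ) :
    Gamma (z + n) = Gamma z * (ascPochhammer ℝ n).eval z := by
  induction n with
  | zero => simp
  | succ n ih =>
    have hzn : z + n ≠ 0 := fun h ↦ hz n (eq_neg_of_add_eq_zero_left h)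
    rw [Nat.cast_succ, ← add_assoc, Gamma_add_one hzn, ih, ascPochhammer_succ_eval]
    ring

lemma ofReal_abs_mul_lintegral_comp_mul_left {c : ℝ} (hc : c ≠ 0) (f : ℝ → ℝ≥0∞) :
    ENNReal.ofReal |c| * ∫⁻ x, f (c * x) = ∫⁻ x, f x := by
  conv_rhs => rw [← Real.smul_map_volume_mul_left hc, lintegral_smul_measure, smul_eq_mul]
  exact congrArg _ (lintegral_map_equiv f (Homeomorph.mulLeft₀ c hc).toMeasurableEquiv).symm

section GammaPDF

variable {a b c r s x : ℝ}

@[fun_prop]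
lemma measurable_gammaPDF (a r : ℝ) : Measurable (gammaPDF a r) :=
  (measurable_gammaPDFReal a r).ennreal_ofReal

lemma gammaPDF_const_mul (hc : 0 < c) (hr : 0 ≤ r) :
    ENNReal.ofReal c * gammaPDF a (r / c) (c * x) = gammaPDF a r x := by
  rcases lt_or_ge x 0 with hx | hx
  · rw [gammaPDF_of_neg hx, gammaPDF_of_neg (mul_neg_of_pos_of_neg hc hx), mul_zero]
  · rw [gammaPDF_of_nonneg hx, gammaPDF_of_nonneg (by positivity), ← ENNReal.ofReal_mul hc.le,
      div_rpow hr hc.le, mul_rpow hc.le hx, rpow_sub_one hc.ne']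
    congr 1
    field_simp

lemma map_const_mul_gammaMeasure (a : ℝ) (hc : 0 < c) (hr : 0 ≤ r) :
    (gammaMeasure a r).map (c * ·) = gammaMeasure a (r / c) := by
  ext S hS
  have hcS : MeasurableSet ((c * ·) ⁻¹' S) := measurable_const_mul c hS
  rw [Measure.map_apply (measurable_const_mul c) hS, gammaMeasure, gammaMeasure,
    withDensity_apply _ hS, withDensity_apply _ hcS, ← lintegral_indicator hS,
    ← lintegral_indicator hcS]
  calc ∫⁻ x, ((c * ·) ⁻¹' S).indicator (gammaPDF a r) x
    _ = ∫⁻ x, ENNReal.ofReal c * S.indicator (gammaPDF a (r / c)) (c * x) := by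
      refine lintegral_congr fun x ↦ ?_
      by_cases hx : c * x ∈ S <;> simp [indicator, hx, gammaPDF_const_mul hc hr]
    _ = ∫⁻ x, S.indicator (gammaPDF a (r / c)) x := by
      rw [lintegral_const_mul' _ _ ENNReal.ofReal_ne_top]
      simpa only [abs_of_pos hc] using ofReal_abs_mul_lintegral_comp_mul_left hc.ne' _

lemma gammaPDF_mul_gammaPDF_eq_mul_betaPDF (ha : 0 < a) (hb : 0 < b) (hr : 0 < r) (hx : 0 < x)
    {u : ℝ} (hu₀ : u ≠ 0) (hu₁ : u ≠ 1) :
    ENNReal.ofReal x * (gammaPDF a r (x * u) * gammaPDF b r (x * (1 - u))) =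
      gammaPDF (a + b) r x * betaPDF a b u := by
  rcases hu₀.lt_or_gt with hu | hu₀
  · rw [gammaPDF_of_neg (mul_neg_of_pos_of_neg hx hu), betaPDF_eq_zero_of_nonpos hu.le]
    simp
  rcases hu₁.lt_or_gt with hu₁ | hu
  · have hu' : 0 < 1 - u := sub_pos.2 hu₁
    rw [gammaPDF_of_nonneg (by positivity), gammaPDF_of_nonneg (by positivity),
      gammaPDF_of_nonneg hx.le, betaPDF_of_pos_lt_one hu₀ hu₁, beta,
      ← ENNReal.ofReal_mul (by positivity), ← ENNReal.ofReal_mul (by positivity),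
      ← ENNReal.ofReal_mul (by positivity)]
    have hexp : rexp (-(r * x)) = rexp (-(r * (x * u))) * rexp (-(r * (x * (1 - u)))) := by
      rw [← exp_add]
      ring_nf
    rw [hexp, mul_rpow hx.le hu₀.le, mul_rpow hx.le hu'.le, rpow_add hr,
      show a + b - 1 = (a - 1) + (b - 1) + 1 by ring, rpow_add_one hx.ne', rpow_add hx]
    congr 1
    field_simp
  · have hu' : 1 - u < 0 := sub_neg.2 hu
    rw [gammaPDF_of_neg (mul_neg_of_pos_of_neg hx hu'), betaPDF_eq_zero_of_one_le hu.le]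
    simp

lemma gammaPDF_lconvolution_gammaPDF (ha : 0 < a) (hb : 0 < b) (hr : 0 < r) (hx : x ≠ 0) :
    (gammaPDF a r ⋆ₗ gammaPDF b r) x = gammaPDF (a + b) r x := by
  rw [lconvolution_def]
  rcases hx.lt_or_gt with hx | hx
  · have hzero (t : ℝ) : gammaPDF a r t * gammaPDF b r (-t + x) = 0 := by
      rcases lt_or_ge t 0 with ht | ht
      · rw [gammaPDF_of_neg ht, zero_mul]
      · rw [gammaPDF_of_neg (x := -t + x) (by linarith), mul_zero]
    simp_rw [hzero, lintegral_zero, gammaPDF_of_neg hx]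
  · calc ∫⁻ t, gammaPDF a r t * gammaPDF b r (-t + x)
      _ = ∫⁻ u, ENNReal.ofReal x * (gammaPDF a r (x * u) * gammaPDF b r (x * (1 - u))) := by
        rw [← ofReal_abs_mul_lintegral_comp_mul_left hx.ne', abs_of_pos hx,
          lintegral_const_mul' _ _ ENNReal.ofReal_ne_top]
        ring_nf
      _ = ∫⁻ u, gammaPDF (a + b) r x * betaPDF a b u := by
        refine lintegral_congr_ae ?_
        filter_upwards [Measure.ae_ne volume 0, Measure.ae_ne volume 1] with u hu₀ hu₁
        exact gammaPDF_mul_gammaPDF_eq_mul_betaPDF ha hb hr hx hu₀ hu₁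
      _ = gammaPDF (a + b) r x := by
        have htop : gammaPDF (a + b) r x ≠ ∞ := ENNReal.ofReal_ne_top
        rw [lintegral_const_mul' _ _ htop, lintegral_betaPDF_eq_one ha hb, mul_one]

lemma tsum_gammaPDF_natCast_add_one (hr : 0 ≤ r) (x : ℝ) :
    ∑' k : ℕ, gammaPDF (k + 1) r x = (Ici 0).indicator (fun _ ↦ ENNReal.ofReal r) x := by
  rcases lt_or_ge x 0 with hx | hx
  · simp [gammaPDF_of_neg hx, hx]
  have hterm (k : ℕ) : gammaPDF (k + 1) r x =
      ENNReal.ofReal (r * rexp (-(r * x)) * ((r * x) ^ k / k !)) := by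
    rw [gammaPDF_of_nonneg hx, Gamma_nat_eq_factorial, add_sub_cancel_right, rpow_natCast,
      ← Nat.cast_add_one, rpow_natCast]
    congr 1
    ring
  have hsum : HasSum (fun k : ℕ ↦ r * rexp (-(r * x)) * ((r * x) ^ k / k !)) r := by
    have hexp := NormedSpace.expSeries_div_hasSum_exp (r * x)
    rw [← exp_eq_exp_ℝ] at hexp
    simpa [mul_assoc, ← exp_add] using hexp.mul_left (r * rexp (-(r * x)))
  simp_rw [hterm]
  rw [← ENNReal.ofReal_tsum_of_nonneg (fun k ↦ by positivity) hsum.summable, hsum.tsum_eq,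
    indicator_of_mem (mem_Ici.2 hx)]

lemma ofReal_mul_gammaMeasure_Iic (ha : 0 < a) (hr : 0 < r) (hx : x ≠ 0) :
    ENNReal.ofReal r * gammaMeasure a r (Iic x) = ∑' k : ℕ, gammaPDF (a + (k + 1)) r x := by
  symm
  calc ∑' k : ℕ, gammaPDF (a + (k + 1)) r x
    _ = ∑' k : ℕ, ∫⁻ t, gammaPDF a r t * gammaPDF (k + 1) r (-t + x) :=
      tsum_congr fun k ↦ (gammaPDF_lconvolution_gammaPDF ha (by positivity) hr hx).symm
    _ = ∫⁻ t, gammaPDF a r t * ∑' k : ℕ, gammaPDF (k + 1) r (-t + x) := by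
      rw [← lintegral_tsum fun k ↦ by fun_prop]
      simp_rw [ENNReal.tsum_mul_left]
    _ = ∫⁻ t, (Iic x).indicator (fun t ↦ ENNReal.ofReal r * gammaPDF a r t) t := by
      refine lintegral_congr fun t ↦ ?_
      by_cases ht : t ≤ x <;> simp [tsum_gammaPDF_natCast_add_one hr.le, indicator, ht, mul_comm]
    _ = ENNReal.ofReal r * gammaMeasure a r (Iic x) := by
      rw [lintegral_indicator measurableSet_Iic, lintegral_const_mul' _ _ ENNReal.ofReal_ne_top,
        gammaMeasure, withDensity_apply _ measurableSet_Iic]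

lemma gammaPDF_mul_gammaPDF (ha : 0 < a) (hb : 0 < b) (hab : 1 < a + b) (hr : 0 < r) (hs : 0 < s)
    (hx : x ≠ 0) :
    gammaPDF a r x * gammaPDF b s x =
      ENNReal.ofReal (r ^ a * s ^ b * Gamma (a + b - 1) /
        (Gamma a * Gamma b * (r + s) ^ (a + b - 1))) * gammaPDF (a + b - 1) (r + s) x := by
  have hab' : 0 < a + b - 1 := sub_pos.2 hab
  rcases hx.lt_or_gt with hx | hx
  · simp_rw [gammaPDF_of_neg hx, mul_zero]
  · have hexp : rexp (-((r + s) * x)) = rexp (-(r * x)) * rexp (-(s * x)) := by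
      rw [← exp_add]
      ring_nf
    simp_rw [gammaPDF_of_nonneg hx.le]
    rw [← ENNReal.ofReal_mul (by positivity), ← ENNReal.ofReal_mul (by positivity), hexp,
      show a + b - 1 - 1 = (a - 1) + (b - 1) by ring, rpow_add hx]
    congr 1
    have := Gamma_pos_of_pos hab'
    field_simp

lemma lintegral_gammaPDF_mul_gammaPDF (ha : 0 < a) (hb : 0 < b) (hab : 1 < a + b)
    (hr : 0 < r) (hs : 0 < s) :
    ∫⁻ x, gammaPDF a r x * gammaPDF b s x =
      ENNReal.ofReal (r ^ a * s ^ b * Gamma (a + b - 1) /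
        (Gamma a * Gamma b * (r + s) ^ (a + b - 1))) := by
  rw [lintegral_congr_ae ((Measure.ae_ne volume 0).mono fun x hx ↦
      gammaPDF_mul_gammaPDF ha hb hab hr hs hx),
    lintegral_const_mul' _ _ ENNReal.ofReal_ne_top,
    lintegral_gammaPDF_eq_one (sub_pos.2 hab) (add_pos hr hs), mul_one]

lemma ofReal_mul_gammaMeasure_prod_snd_le_fst (ha : 0 < a) (hb : 0 < b) (hr : 0 < r)
    (hs : 0 < s) :
    ENNReal.ofReal s * (gammaMeasure a r).prod (gammaMeasure b s) {p | p.2 ≤ p.1} =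
      ∑' k : ℕ, ENNReal.ofReal (r ^ a * s ^ (b + (k + 1)) * Gamma (a + b + k) /
        (Gamma a * Gamma (b + (k + 1)) * (r + s) ^ (a + b + k))) := by
  have := isProbabilityMeasure_gammaMeasure hb hs
  have hS : MeasurableSet {p : ℝ × ℝ | p.2 ≤ p.1} := measurableSet_le measurable_snd measurable_fst
  have hcdf : Measurable fun x ↦ gammaMeasure b s (Iic x) := measurable_measure_prodMk_left hS
  calc ENNReal.ofReal s * (gammaMeasure a r).prod (gammaMeasure b s) {p | p.2 ≤ p.1}
    _ = ENNReal.ofReal s * ∫⁻ x, gammaMeasure b s (Iic x) ∂gammaMeasure a r := by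
      rw [Measure.prod_apply hS]
      rfl
    _ = ∫⁻ x, gammaPDF a r x * (ENNReal.ofReal s * gammaMeasure b s (Iic x)) := by
      rw [gammaMeasure, lintegral_withDensity_eq_lintegral_mul _ (measurable_gammaPDF a r) hcdf,
        ← lintegral_const_mul' _ _ ENNReal.ofReal_ne_top]
      simp_rw [Pi.mul_apply, mul_left_comm]
    _ = ∫⁻ x, ∑' k : ℕ, gammaPDF a r x * gammaPDF (b + (k + 1)) s x := by
      refine lintegral_congr_ae ((Measure.ae_ne volume 0).mono fun x hx ↦ ?_)
      simp only [ofReal_mul_gammaMeasure_Iic hb hs hx, ENNReal.tsum_mul_left]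
    _ = ∑' k : ℕ, ∫⁻ x, gammaPDF a r x * gammaPDF (b + (k + 1)) s x :=
      lintegral_tsum fun k ↦ by fun_prop
    _ = _ := by
      refine tsum_congr fun k ↦ ?_
      have hab : 1 < a + (b + (k + 1)) := by linarith [k.cast_nonneg (α := ℝ)]
      rw [lintegral_gammaPDF_mul_gammaPDF ha (by positivity) hab hr hs,
        show a + (b + (k + 1)) - 1 = a + b + k by ring]

lemma gamma_series_term_eq_mul_hypergeometric_term (hb : 0 < b) (hab : 0 < a + b) (hr : 0 ≤ r)
    (hs : 0 < s) (k : ℕ) :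
    r ^ a * s ^ (b + (k + 1)) * Gamma (a + b + k) /
        (Gamma a * Gamma (b + (k + 1)) * (r + s) ^ (a + b + k)) =
      s * ((r / s) ^ a * Gamma (a + b) / (b * (r / s + 1) ^ (a + b) * Gamma a * Gamma b) *
        ((ascPochhammer ℝ k).eval (a + b) / (ascPochhammer ℝ k).eval (b + 1) *
          (1 / (r / s + 1)) ^ k)) := by
  have hne {z : ℝ} (hz : 0 < z) (n : ℕ) : z ≠ -n := by
    have : (0 : ℝ) ≤ n := n.cast_nonneg
    linarith
  have hGammaNum : Gamma (a + b + k) = Gamma (a + b) * (ascPochhammer ℝ k).eval (a + b) :=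
    Gamma_add_natCast (hne hab) k
  have hGammaDen : Gamma (b + (k + 1)) = b * Gamma b * (ascPochhammer ℝ k).eval (b + 1) := by
    rw [← Gamma_add_one hb.ne', ← Gamma_add_natCast (hne (by positivity)), add_right_comm,
      add_assoc]
  have hpow : r ^ a * s ^ (b + (k + 1)) / (r + s) ^ (a + b + k) =
      s * ((r / s) ^ a / (r / s + 1) ^ (a + b) * (1 / (r / s + 1)) ^ k) := by
    obtain ⟨q, hq, rfl⟩ : ∃ q, 0 ≤ q ∧ r = q * s := ⟨r / s, by positivity, by field_simp⟩
    have hsum : q * s + s = (q + 1) * s := by ring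
    rw [mul_div_cancel_right₀ q hs.ne', hsum, mul_rpow hq hs.le, mul_rpow (by positivity) hs.le,
      rpow_add_natCast (x := q + 1) (by positivity),
      show b + (k + 1) = (a + b + k) + 1 - a by ring, rpow_sub hs, rpow_add_one hs.ne', one_div,
      inv_pow]
    field_simp
  rw [hGammaNum, hGammaDen]
  linear_combination (Gamma (a + b) * (ascPochhammer ℝ k).eval (a + b) /
    (b * Gamma a * Gamma b * (ascPochhammer ℝ k).eval (b + 1))) * hpow

lemma measureReal_gammaMeasure_prod_snd_le_fst (ha : 0 < a) (hb : 0 < b) (hr : 0 < r)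
    (hs : 0 < s) :
    ((gammaMeasure a r).prod (gammaMeasure b s)).real {p | p.2 ≤ p.1} =
      (r / s) ^ a * Gamma (a + b) / (b * (r / s + 1) ^ (a + b) * Gamma a * Gamma b) *
        hyp2F1One (a + b) (b + 1) (1 / (r / s + 1)) := by
  have hseries := congrArg ENNReal.toReal (ofReal_mul_gammaMeasure_prod_snd_le_fst ha hb hr hs)
  rw [ENNReal.toReal_mul, ENNReal.toReal_ofReal hs.le,
    ENNReal.tsum_toReal_eq fun _ ↦ ENNReal.ofReal_ne_top] at hseries
  refine mul_left_cancel₀ hs.ne' (hseries.trans ?_)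
  rw [hyp2F1One, ← tsum_mul_left, ← tsum_mul_left]
  refine tsum_congr fun k ↦ ?_
  rw [ENNReal.toReal_ofReal (by positivity),
    gamma_series_term_eq_mul_hypergeometric_term hb (add_pos ha hb) hr.le hs]

lemma measureReal_gammaMeasure_prod_fst_lt_snd (ha : 0 < a) (hb : 0 < b) (hr : 0 < r)
    (hs : 0 < s) :
    ((gammaMeasure a r).prod (gammaMeasure b s)).real {p | p.1 < p.2} =
      1 - (r / s) ^ a * Gamma (a + b) / (b * (r / s + 1) ^ (a + b) * Gamma a * Gamma b) *
        hyp2F1One (a + b) (b + 1) (1 / (r / s + 1)) := by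
  have := isProbabilityMeasure_gammaMeasure ha hr
  have := isProbabilityMeasure_gammaMeasure hb hs
  have hcompl : {p : ℝ × ℝ | p.1 < p.2} = {p | p.2 ≤ p.1}ᶜ := by
    ext
    simp
  rw [hcompl, probReal_compl_eq_one_sub (measurableSet_le measurable_snd measurable_fst),
    measureReal_gammaMeasure_prod_snd_le_fst ha hb hr hs]

end GammaPDF

/-- Corollary 1: the CDF of the ratio of two independent Gamma random variables. -/
theorem gamma_ratio_cdf {Ω : Type*} [MeasurableSpace Ω] (P : Measure Ω)
    [IsProbabilityMeasure P] (νT θT νI θI β : ℝ)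
    (hνT : 0 < νT) (hθT : 0 < θT) (hνI : 0 < νI) (hθI : 0 < θI) (hβ : 0 < β)
    (T I : Ω → ℝ) (hTmeas : Measurable T) (hImeas : Measurable I)
    (hT : P.map T = gammaMeasure νT θT⁻¹) (hI : P.map I = gammaMeasure νI θI⁻¹)
    (hTI : IndepFun T I P) :
    (P {ω | T ω < β * I ω}).toReal =
      1 - (β * θI / θT) ^ νT * Real.Gamma (νT + νI) /
            (νI * (β * θI / θT + 1) ^ (νT + νI) * Real.Gamma νT * Real.Gamma νI) *
          hyp2F1One (νT + νI) (νI + 1) (1 / (β * θI / θT + 1)) := by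
  have hβI : P.map (fun ω ↦ β * I ω) = gammaMeasure νI (θI⁻¹ / β) := by
    rw [← map_const_mul_gammaMeasure νI hβ (by positivity), ← hI,
      Measure.map_map (measurable_const_mul β) hImeas]
    rfl
  have hindep : IndepFun T (fun ω ↦ β * I ω) P :=
    hTI.comp measurable_id (measurable_const_mul β)
  have hjoint : P.map (fun ω ↦ (T ω, β * I ω)) =
      (gammaMeasure νT θT⁻¹).prod (gammaMeasure νI (θI⁻¹ / β)) := by
    rw [hindep.map_prod_eq_prod_map_map (by fun_prop) (by fun_prop), hT, hβI]
  have hrate : θT⁻¹ / (θI⁻¹ / β) = β * θI / θT := by field_simp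
  calc (P {ω | T ω < β * I ω}).toReal
    _ = (P.map fun ω ↦ (T ω, β * I ω)).real {p | p.1 < p.2} := by
      rw [map_measureReal_apply (by fun_prop) (measurableSet_lt measurable_fst measurable_snd)]
      rfl
    _ = _ := by
      rw [hjoint, measureReal_gammaMeasure_prod_fst_lt_snd hνT hνI (by positivity) (by positivity),
        hrate]
end

section
/- Let a, p, μ, ν > 0 be real numbers. Then ∫_0^∞ x^(μ−1) e^(−p x) Γ(ν, a x) dx = (a^ν Γ(μ + ν)) / (μ (a + p)^{μ + ν}) · ₂F₁(1, μ + ν; μ + 1; p/(a + p)), where Γ(ν, y) is the upper incomplete gamma function and Γ is the Euler Gamma function. -/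
open MeasureTheory Polynomial

/-- The upper incomplete gamma function `Γ(s, y) = ∫_y^∞ t^(s-1) e^(-t) dt`. -/
noncomputable def upperGamma (s y : ℝ) : ℝ :=
  ∫ t in Set.Ioi y, t ^ (s - 1) * Real.exp (-t)

/-!
Substituting `t = y / u` gives `Γ(s, y) = y ^ s * ∫_0^1 u ^ (-s - 1) e ^ (-y / u) du`. Inserting
this into the integral over `x` and exchanging the two integrations makes the inner one a Gamma
integral, so that what remains is `∫_0^1 u ^ (μ - 1) (a + p u) ^ (-(μ + ν)) du`. Since
`a + p u = (a + p) (1 - z (1 - u))` with `z = p / (a + p)`, this is Euler's integral for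
`₂F₁(1, μ + ν; μ + 1; z)`, which follows from the binomial series and the Beta integral.
-/

open Set

lemma image_const_div_Ioc_zero {K : Type*} [Field K] [LinearOrder K] [IsStrictOrderedRing K]
    {b y : K} (hb : 0 < b) (hy : 0 < y) : (fun u ↦ y / u) '' Ioc 0 b = Ici (y / b) := by
  ext t
  constructor
  · rintro ⟨u, ⟨hu₀, hub⟩, rfl⟩
    exact div_le_div_of_nonneg_left hy.le hu₀ hub
  · intro ht
    have ht₀ : 0 < t := (div_pos hy hb).trans_le ht
    exact ⟨y / t, ⟨div_pos hy ht₀, (div_le_comm₀ hb ht₀).1 ht⟩, div_div_cancel₀ hy.ne'⟩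

lemma upperGamma_eq_rpow_mul_integral (s : ℝ) {y : ℝ} (hy : 0 < y) :
    upperGamma s y = y ^ s * ∫ u in Ioc (0 : ℝ) 1, u ^ (-s - 1) * Real.exp (-(y / u)) := by
  have hderiv : ∀ u ∈ Ioc (0 : ℝ) 1,
      HasDerivWithinAt (fun u ↦ y / u) (-(y / u ^ 2)) (Ioc 0 1) u := fun u hu ↦ by
    simpa [div_eq_mul_inv] using ((hasDerivAt_inv hu.1.ne').const_mul y).hasDerivWithinAt
  have hinj : InjOn (fun u : ℝ ↦ y / u) (Ioc 0 1) :=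
    fun u _ v _ huv ↦ by simpa [div_eq_mul_inv, hy.ne'] using huv
  have himage : (fun u ↦ y / u) '' Ioc 0 1 = Ici y := by
    rw [image_const_div_Ioc_zero one_pos hy, div_one]
  rw [upperGamma, ← integral_Ici_eq_integral_Ioi, ← himage,
    integral_image_eq_integral_abs_deriv_smul measurableSet_Ioc hderiv hinj,
    ← integral_const_mul]
  refine setIntegral_congr_fun measurableSet_Ioc fun u hu ↦ ?_
  have hu₀ : 0 < u := hu.1
  have hpow : u ^ (-s - 1) = (u ^ (s - 1))⁻¹ * (u ^ 2)⁻¹ := by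
    rw [← Real.rpow_natCast, ← Real.rpow_neg hu₀.le, ← Real.rpow_neg hu₀.le,
      ← Real.rpow_add hu₀]
    congr 1
    push_cast
    ring
  have habs : |-(y / u ^ 2)| = y / u ^ 2 := by rw [abs_neg, abs_of_pos (by positivity)]
  simp only [habs, smul_eq_mul]
  rw [Real.div_rpow hy.le hu₀.le, hpow, Real.rpow_sub_one hy.ne']
  field_simp

lemma add_mul_pos_of_mem_Icc {R : Type*} [Ring R] [LinearOrder R] [IsOrderedRing R]
    {a p u : R} (ha : 0 < a) (hap : 0 < a + p) (hu : u ∈ Icc 0 1) : 0 < a + p * u := by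
  rcases le_total 0 p with hp | hp
  · exact add_pos_of_pos_of_nonneg ha (mul_nonneg hp hu.1)
  · exact hap.trans_le (add_le_add_right (le_mul_of_le_one_right hp hu.2) a)

lemma integrableOn_rpow_mul_add_mul_rpow {a p s : ℝ} (r : ℝ) (ha : 0 < a) (hap : 0 < a + p)
    (hs : 0 < s) :
    IntegrableOn (fun u : ℝ ↦ u ^ (s - 1) * (a + p * u) ^ r) (Ioc 0 1) := by
  have hcont : ContinuousOn (fun u : ℝ ↦ (a + p * u) ^ r) (Icc 0 1) :=
    ContinuousOn.rpow_const (by fun_prop) fun u hu ↦ .inl (add_mul_pos_of_mem_Icc ha hap hu).ne'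
  have hrpow : IntegrableOn (fun u : ℝ ↦ u ^ (s - 1)) (Ioc 0 1) :=
    (intervalIntegral.intervalIntegrable_rpow' (by linarith)).1
  rw [← integrableOn_Icc_iff_integrableOn_Ioc] at hrpow ⊢
  exact hrpow.mul_continuousOn hcont isCompact_Icc

/-- The two-variable integrand behind the exchange of integrations: up to the constant `a ^ ν`,
its integral over `0 < u ≤ 1` is `x ^ (μ - 1) * e ^ (-p x) * Γ(ν, a x)`, and up to `Γ(μ + ν)` its
integral over `x > 0` is the Euler-type integrand `u ^ (μ - 1) * (a + p u) ^ (-(μ + ν))`. -/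
noncomputable def laplaceEulerKernel (a p μ ν x u : ℝ) : ℝ :=
  u ^ (-ν - 1) * (x ^ (μ + ν - 1) * Real.exp (-((p + a / u) * x)))

section laplaceEulerKernel

variable {a p μ ν : ℝ}

lemma integral_laplaceEulerKernel_right (ha : 0 < a) {x : ℝ} (hx : 0 < x) :
    a ^ ν * ∫ u in Ioc (0 : ℝ) 1, laplaceEulerKernel a p μ ν x u =
      x ^ (μ - 1) * Real.exp (-(p * x)) * upperGamma ν (a * x) := by
  have hpow : x ^ (μ + ν - 1) = x ^ (μ - 1) * x ^ ν := by
    rw [← Real.rpow_add hx]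
    congr 1
    ring
  have hexp (u : ℝ) :
      Real.exp (-((p + a / u) * x)) = Real.exp (-(p * x)) * Real.exp (-(a * x / u)) := by
    rw [← Real.exp_add]
    congr 1
    ring
  rw [upperGamma_eq_rpow_mul_integral ν (by positivity), Real.mul_rpow ha.le hx.le, ← mul_assoc,
    ← integral_const_mul, ← integral_const_mul]
  congr with u
  rw [laplaceEulerKernel, hpow, hexp]
  ring

lemma add_div_pos_of_mem_Ioc (ha : 0 < a) (hap : 0 < a + p) {u : ℝ} (hu : u ∈ Ioc 0 1) :
    0 < p + a / u := by
  rw [add_div' _ _ _ hu.1.ne', add_comm]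
  exact div_pos (add_mul_pos_of_mem_Icc ha hap (Ioc_subset_Icc_self hu)) hu.1

lemma integral_laplaceEulerKernel_left (ha : 0 < a) (hap : 0 < a + p) (hμν : 0 < μ + ν)
    {u : ℝ} (hu : u ∈ Ioc 0 1) :
    ∫ x in Ioi (0 : ℝ), laplaceEulerKernel a p μ ν x u =
      Real.Gamma (μ + ν) * (u ^ (μ - 1) * (a + p * u) ^ (-(μ + ν))) := by
  have hpos := add_mul_pos_of_mem_Icc ha hap (Ioc_subset_Icc_self hu)
  have hbase : 1 / (p + a / u) = u / (a + p * u) := by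
    rw [add_div' _ _ _ hu.1.ne', one_div_div, add_comm a]
  have hpow : u ^ (μ - 1) = u ^ (-ν - 1) * u ^ (μ + ν) := by
    rw [← Real.rpow_add hu.1]
    congr 1
    ring
  simp only [laplaceEulerKernel]
  rw [integral_const_mul,
    Real.integral_rpow_mul_exp_neg_mul_Ioi hμν (add_div_pos_of_mem_Ioc ha hap hu), hbase,
    Real.div_rpow hu.1.le hpos.le, Real.rpow_neg hpos.le, hpow]
  ring

lemma integrableOn_laplaceEulerKernel_left (ha : 0 < a) (hap : 0 < a + p) (hμν : 0 < μ + ν)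
    {u : ℝ} (hu : u ∈ Ioc 0 1) :
    IntegrableOn (fun x ↦ laplaceEulerKernel a p μ ν x u) (Ioi 0) := by
  have h := integrableOn_rpow_mul_exp_neg_mul_rpow (s := μ + ν - 1) (by linarith) one_pos
    (add_div_pos_of_mem_Ioc ha hap hu)
  simp only [Real.rpow_one, neg_mul] at h
  exact h.const_mul _

lemma measurable_uncurry_laplaceEulerKernel :
    Measurable (Function.uncurry (laplaceEulerKernel a p μ ν)) := by
  unfold Function.uncurry laplaceEulerKernel
  fun_prop

lemma integrable_laplaceEulerKernel (ha : 0 < a) (hap : 0 < a + p) (hμ : 0 < μ)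
    (hμν : 0 < μ + ν) :
    Integrable (Function.uncurry (laplaceEulerKernel a p μ ν))
      ((volume.restrict (Ioi 0)).prod (volume.restrict (Ioc 0 1))) := by
  refine (integrable_prod_iff' measurable_uncurry_laplaceEulerKernel.aestronglyMeasurable).2
    ⟨?_, ?_⟩
  · exact ae_restrict_of_forall_mem measurableSet_Ioc fun u hu ↦
      integrableOn_laplaceEulerKernel_left ha hap hμν hu
  · refine IntegrableOn.congr_fun ((integrableOn_rpow_mul_add_mul_rpow (-(μ + ν)) ha hap
      hμ).const_mul (Real.Gamma (μ + ν))) (fun u hu ↦ ?_) measurableSet_Ioc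
    rw [← integral_laplaceEulerKernel_left ha hap hμν hu]
    refine setIntegral_congr_fun measurableSet_Ioi fun x hx ↦ ?_
    have hx₀ : 0 < x := hx
    have hu₀ : 0 < u := hu.1
    have hnonneg : 0 ≤ laplaceEulerKernel a p μ ν x u := by
      unfold laplaceEulerKernel
      positivity
    exact (Real.norm_of_nonneg hnonneg).symm

end laplaceEulerKernel

lemma integral_rpow_exp_upperGamma_eq_integral_Ioc {a p μ ν : ℝ} (ha : 0 < a) (hap : 0 < a + p)
    (hμ : 0 < μ) (hμν : 0 < μ + ν) :
    ∫ x in Ioi (0 : ℝ), x ^ (μ - 1) * Real.exp (-(p * x)) * upperGamma ν (a * x) =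
      a ^ ν * Real.Gamma (μ + ν) *
        ∫ u in Ioc (0 : ℝ) 1, u ^ (μ - 1) * (a + p * u) ^ (-(μ + ν)) := by
  calc
    _ = ∫ x in Ioi (0 : ℝ), a ^ ν * ∫ u in Ioc (0 : ℝ) 1, laplaceEulerKernel a p μ ν x u :=
      setIntegral_congr_fun measurableSet_Ioi fun x hx ↦
        (integral_laplaceEulerKernel_right ha hx).symm
    _ = a ^ ν * ∫ u in Ioc (0 : ℝ) 1, ∫ x in Ioi (0 : ℝ), laplaceEulerKernel a p μ ν x u := by
      rw [integral_const_mul,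
        integral_integral_swap (integrable_laplaceEulerKernel ha hap hμ hμν)]
    _ = a ^ ν * ∫ u in Ioc (0 : ℝ) 1,
          Real.Gamma (μ + ν) * (u ^ (μ - 1) * (a + p * u) ^ (-(μ + ν))) := by
      rw [setIntegral_congr_fun measurableSet_Ioc fun u hu ↦
        integral_laplaceEulerKernel_left ha hap hμν hu]
    _ = _ := by rw [integral_const_mul, mul_assoc]

lemma hasSum_ascPochhammer_div_factorial_mul_pow (b : ℝ) {x : ℝ} (hx : |x| < 1) :
    HasSum (fun k : ℕ ↦ (ascPochhammer ℝ k).eval b / k.factorial * x ^ k) ((1 - x) ^ (-b)) := by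
  have hmem : x ∈ Metric.eball (0 : ℝ) 1 := by
    simpa [enorm_eq_nnnorm, ← NNReal.coe_lt_coe] using hx
  have hsum := (Real.one_div_one_sub_rpow_hasFPowerSeriesOnBall_zero b).hasSum hmem
  have hcoeff (k : ℕ) :
      Ring.choose (b + k - 1) k = (ascPochhammer ℝ k).eval b / k.factorial := by
    rw [← Ring.multichoose_eq, eq_div_iff (by positivity), mul_comm, ← nsmul_eq_mul,
      Ring.factorial_nsmul_multichoose_eq_ascPochhammer, ascPochhammer_smeval_eq_eval]
  simpa [FormalMultilinearSeries.ofScalars_apply_eq, hcoeff, mul_comm, one_div,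
    ← Real.rpow_neg (sub_nonneg.2 (le_of_abs_le hx.le))] using hsum

lemma ascPochhammer_eval_eq_prod_range {R : Type*} [CommSemiring R] (k : ℕ) (x : R) :
    (ascPochhammer R k).eval x = ∏ j ∈ Finset.range k, (x + j) := by
  induction k with
  | zero => simp
  | succ k ih => rw [ascPochhammer_succ_eval, ih, Finset.prod_range_succ]

lemma integral_rpow_mul_one_sub_pow {s : ℝ} (hs : 0 < s) (k : ℕ) :
    ∫ u in Ioc (0 : ℝ) 1, u ^ (s - 1) * (1 - u) ^ k =
      k.factorial / (s * (ascPochhammer ℝ k).eval (s + 1)) := by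
  have hbeta := Complex.betaIntegral_eval_nat_add_one_right (u := s) (by simpa using hs) k
  have hprod : ∏ j ∈ Finset.range (k + 1), (s + j) = s * (ascPochhammer ℝ k).eval (s + 1) := by
    rw [← ascPochhammer_eval_eq_prod_range, ascPochhammer_succ_left]
    simp
  rw [← hprod, ← intervalIntegral.integral_of_le zero_le_one, ← Complex.ofReal_inj,
    ← intervalIntegral.integral_ofReal]
  push_cast
  rw [← hbeta, Complex.betaIntegral]
  refine intervalIntegral.integral_congr fun u hu ↦ ?_
  rw [uIcc_of_le zero_le_one] at hu
  simp [Complex.ofReal_cpow hu.1]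

lemma hasSum_integral_mul_pow {α 𝕜 : Type*} [MeasurableSpace α] {m : Measure α} [RCLike 𝕜]
    {A : ℕ → 𝕜} {f φ : α → 𝕜} (hA : Summable (‖A ·‖)) (hf : Integrable f m)
    (hφ : AEStronglyMeasurable φ m) (hφ₁ : ∀ᵐ t ∂m, ‖φ t‖ ≤ 1) :
    HasSum (fun k ↦ A k * ∫ t, f t * φ t ^ k ∂m) (∫ t, f t * ∑' k, A k * φ t ^ k ∂m) := by
  have hbound : ∀ᵐ t ∂m, ∀ k, ‖A k * φ t ^ k‖ ≤ ‖A k‖ := by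
    filter_upwards [hφ₁] with t ht k
    rw [norm_mul, norm_pow]
    exact mul_le_of_le_one_right (norm_nonneg _) (pow_le_one₀ (norm_nonneg _) ht)
  have hsum : HasSum (fun k ↦ ∫ t, f t * (A k * φ t ^ k) ∂m)
      (∫ t, f t * ∑' k, A k * φ t ^ k ∂m) := by
    refine hasSum_integral_of_dominated_convergence (fun k t ↦ ‖f t‖ * ‖A k‖)
      (fun k ↦ hf.aestronglyMeasurable.mul ((hφ.pow k).const_mul _)) (fun k ↦ ?_)
      (.of_forall fun t ↦ hA.mul_left _) ?_ ?_
    · filter_upwards [hbound] with t ht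
      rw [norm_mul]
      exact mul_le_mul_of_nonneg_left (ht k) (norm_nonneg _)
    · simpa only [tsum_mul_left] using hf.norm.mul_const _
    · filter_upwards [hbound] with t ht
      exact (hA.of_norm_bounded ht).hasSum.mul_left _
  simpa only [mul_left_comm (f _), integral_const_mul] using hsum

/-- Euler's integral representation, in the variable `u = 1 - t`. -/
lemma hyp2F1One_eq_integral (b : ℝ) {c x : ℝ} (hc : 1 < c) (hx : |x| < 1) :
    hyp2F1One b c x =
      (c - 1) * ∫ u in Ioc (0 : ℝ) 1, u ^ (c - 1 - 1) * (1 - x * (1 - u)) ^ (-b) := by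
  have hs : 0 < c - 1 := sub_pos.2 hc
  have hcoeff : Summable
      fun k : ℕ ↦ ‖(ascPochhammer ℝ k).eval b / k.factorial * x ^ k‖ :=
    (hasSum_ascPochhammer_div_factorial_mul_pow b hx).summable.norm
  have hone_sub : ∀ u ∈ Ioc (0 : ℝ) 1, ‖1 - u‖ ≤ 1 := fun u hu ↦
    abs_le.2 ⟨by linarith [hu.2], by linarith [hu.1]⟩
  have hbinomial : ∀ u ∈ Ioc (0 : ℝ) 1,
      ∑' k : ℕ, (ascPochhammer ℝ k).eval b / k.factorial * x ^ k * (1 - u) ^ k =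
        (1 - x * (1 - u)) ^ (-b) := fun u hu ↦ by
    have hxu : |x * (1 - u)| < 1 := by
      rw [abs_mul]
      exact (mul_le_of_le_one_right (abs_nonneg x) (hone_sub u hu)).trans_lt hx
    rw [← (hasSum_ascPochhammer_div_factorial_mul_pow b hxu).tsum_eq]
    simp only [mul_pow, mul_assoc]
  have hrpow : IntegrableOn (fun u : ℝ ↦ u ^ (c - 1 - 1)) (Ioc 0 1) :=
    (intervalIntegral.intervalIntegrable_rpow' (by linarith)).1
  have hsum := hasSum_integral_mul_pow hcoeff hrpow (by fun_prop)
    (ae_restrict_of_forall_mem measurableSet_Ioc hone_sub)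
  rw [setIntegral_congr_fun measurableSet_Ioc fun u hu ↦
    congrArg (u ^ (c - 1 - 1) * ·) (hbinomial u hu)] at hsum
  rw [← (hsum.mul_left (c - 1)).tsum_eq, hyp2F1One]
  refine tsum_congr fun k ↦ ?_
  rw [integral_rpow_mul_one_sub_pow hs, sub_add_cancel]
  have := (ascPochhammer_pos k c (by linarith)).ne'
  field_simp

theorem integral_rpow_exp_upperGamma_general {a p μ ν : ℝ} (hp : |p| < a + p) (hμ : 0 < μ)
    (hμν : 0 < μ + ν) :
    ∫ x in Ioi (0 : ℝ), x ^ (μ - 1) * Real.exp (-(p * x)) * upperGamma ν (a * x) =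
      a ^ ν * Real.Gamma (μ + ν) / (μ * (a + p) ^ (μ + ν)) *
        hyp2F1One (μ + ν) (μ + 1) (p / (a + p)) := by
  have ha : 0 < a := by linarith [le_abs_self p]
  have hap : 0 < a + p := (abs_nonneg p).trans_lt hp
  have hz : |p / (a + p)| < 1 := by rwa [abs_div, abs_of_pos hap, div_lt_one hap]
  have heuler : ∫ u in Ioc (0 : ℝ) 1, u ^ (μ - 1) * (a + p * u) ^ (-(μ + ν)) =
      (a + p) ^ (-(μ + ν)) *
        ∫ u in Ioc (0 : ℝ) 1, u ^ (μ - 1) * (1 - p / (a + p) * (1 - u)) ^ (-(μ + ν)) := by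
    rw [← integral_const_mul]
    refine setIntegral_congr_fun measurableSet_Ioc fun u hu ↦ ?_
    have hpos := add_mul_pos_of_mem_Icc ha hap (Ioc_subset_Icc_self hu)
    have hfactor : 1 - p / (a + p) * (1 - u) = (a + p * u) / (a + p) := by
      field_simp
      ring
    rw [hfactor, Real.div_rpow hpos.le hap.le]
    field_simp
  rw [integral_rpow_exp_upperGamma_eq_integral_Ioc ha hap hμ hμν, heuler,
    hyp2F1One_eq_integral _ (by linarith) hz, Real.rpow_neg hap.le,
    add_sub_cancel_right]
  field_simp

/-- Gradshteyn–Ryzhik Eq. 6.455.1. -/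
theorem integral_rpow_exp_upperGamma (a p μ ν : ℝ)
    (ha : 0 < a) (hp : 0 < p) (hμ : 0 < μ) (hν : 0 < ν) :
    ∫ x in Set.Ioi (0 : ℝ), x ^ (μ - 1) * Real.exp (-(p * x)) * upperGamma ν (a * x) =
      a ^ ν * Real.Gamma (μ + ν) / (μ * (a + p) ^ (μ + ν)) *
        hyp2F1One (μ + ν) (μ + 1) (p / (a + p)) :=
  integral_rpow_exp_upperGamma_general (by rwa [abs_of_pos hp, lt_add_iff_pos_left]) hμ
    (by positivity)
end
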